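/- arXiv:math/0205236 — 3 statements merged into one kernel-verified Lean document; each statement's English description precedes it below -/
import Mathlib

section
/- Let r be a prime, let ξ = exp(2πi/r) ∈ ℂ, let d be an integer not divisible by r, and let g ≥ 1 be an integer. Then for all complex numbers u and v, ∑_{j=0}^{r-1} ξ^{-jd} · ( ∏_{i=1}^{r-1} (1 - ξ^{ij}u)(1 - ξ^{ij}v) )^{g-1} = ((1-u)(1-v))^{(r-1)(g-1)} − ( (∑_{k=0}^{r-1} u^k)(∑_{k=0}^{r-1} v^k) )^{g-1}. -/
open Finset

/-!
Separate the term `j = 0`, which is `((1 - u) * (1 - v)) ^ ((r - 1) * (g - 1))`. For `0 < j < r`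
the power `ξ ^ j` is again a primitive `r`-th root of unity, since `r` is prime, so the factorization
`1 - u ^ r = ∏_{i < r} (1 - ζ ^ i * u)` gives `∏_{0 < i < r} (1 - (ξ ^ j) ^ i * u) = ∑_{k < r} u ^ k`
(`prod_one_sub_pow_mul`): the product does not depend on `j`. What remains is
`∑_{0 < j < r} ξ ^ (-j d) = -1` (`sum_zpow_succ`), because `ξ ^ (-d)` is primitive as well.
-/

/-- The product over the nontrivial `r`-th roots of unity. For `u ≠ 1` cancel `1 - u` in the
factorization of `1 - u ^ r`; at `u = 1` both sides equal `r`. -/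
lemma prod_one_sub_pow_mul {r : ℕ} (hr : 0 < r) {ζ : ℂ} (hζ : IsPrimitiveRoot ζ r) (u : ℂ) :
    ∏ i ∈ Finset.Icc 1 (r - 1), (1 - ζ ^ i * u) = ∑ k ∈ Finset.range r, u ^ k := by
  obtain ⟨n, rfl⟩ : ∃ n, r = n + 1 := ⟨r - 1, by omega⟩
  have hIcc : ∏ i ∈ Finset.Icc 1 (n + 1 - 1), (1 - ζ ^ i * u)
      = ∏ i ∈ Finset.range n, (1 - ζ ^ (i + 1) * u) := by
    rw [Finset.range_eq_Ico, Finset.prod_Ico_add' (fun i => 1 - ζ ^ i * u) 0 n 1]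
    rfl
  rw [hIcc]
  by_cases hu : u = 1
  · subst hu
    simpa using hζ.prod_one_sub_pow_eq_order
  · have h := congrArg (Polynomial.eval 1)
      (X_pow_sub_C_eq_prod hζ hr (rfl : u ^ (n + 1) = u ^ (n + 1)))
    rw [Polynomial.eval_prod, Finset.prod_range_succ'] at h
    simp only [Polynomial.eval_sub, Polynomial.eval_pow, Polynomial.eval_X, Polynomial.eval_C,
      one_pow, pow_zero, one_mul] at h
    apply mul_right_cancel₀ (sub_ne_zero.mpr (Ne.symm hu))
    rw [← h, geom_sum_mul_neg]

lemma sum_zpow_succ {n : ℕ} (hr : (n + 1).Prime) {d : ℤ} (hd : ¬ (((n + 1 : ℕ) : ℤ) ∣ d))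
    {ξ : ℂ} (hξ : IsPrimitiveRoot ξ (n + 1)) :
    ∑ j ∈ Finset.range n, ξ ^ (-(((j + 1 : ℕ) : ℤ) * d)) = -1 := by
  have hd' : Int.gcd (-d) ((n + 1 : ℕ) : ℤ) = 1 := by
    rw [Int.gcd_comm, Int.gcd_neg, ← Int.isCoprime_iff_gcd_eq_one]
    exact (Nat.prime_iff_prime_int.mp hr).coprime_iff_not_dvd.mpr hd
  have h := (hξ.zpow_of_gcd_eq_one (-d) hd').geom_sum_eq_zero hr.one_lt
  rw [Finset.sum_range_succ', pow_zero] at h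
  rw [← eq_neg_of_add_eq_zero_left h]
  refine Finset.sum_congr rfl fun j _ => ?_
  rw [← zpow_natCast, ← zpow_mul]
  congr 1
  ring

/-- Roots-of-unity averaging identity (core of Proposition 6.2):
for `r` prime, `ξ = exp(2πi/r)`, `d` not divisible by `r`, and `g ≥ 1`,
`∑_{j=0}^{r-1} ξ^{-jd} (∏_{i=1}^{r-1} (1-ξ^{ij}u)(1-ξ^{ij}v))^{g-1}
  = ((1-u)(1-v))^{(r-1)(g-1)} - ((∑_k u^k)(∑_k v^k))^{g-1}`. -/
theorem stmt0 (r : ℕ) (hr : r.Prime) (d : ℤ) (hd : ¬ ((r : ℤ) ∣ d)) (g : ℕ) (hg : 1 ≤ g)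
    (ξ : ℂ) (hξ : ξ = Complex.exp (2 * Real.pi * Complex.I / r)) (u v : ℂ) :
    ∑ j ∈ Finset.range r, ξ ^ (-((j : ℤ) * d)) *
        (∏ i ∈ Finset.Icc 1 (r - 1), ((1 - ξ ^ (i * j) * u) * (1 - ξ ^ (i * j) * v))) ^ (g - 1)
      = ((1 - u) * (1 - v)) ^ ((r - 1) * (g - 1))
        - ((∑ k ∈ Finset.range r, u ^ k) * (∑ k ∈ Finset.range r, v ^ k)) ^ (g - 1) := by
  have hprim : IsPrimitiveRoot ξ r := hξ ▸ Complex.isPrimitiveRoot_exp r hr.ne_zero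
  obtain ⟨n, rfl⟩ : ∃ n, r = n + 1 := ⟨r - 1, by have := hr.pos; omega⟩
  have hterm : ∀ j ∈ Finset.range n,
      ξ ^ (-(((j + 1 : ℕ) : ℤ) * d)) * (∏ i ∈ Finset.Icc 1 (n + 1 - 1),
        ((1 - ξ ^ (i * (j + 1)) * u) * (1 - ξ ^ (i * (j + 1)) * v))) ^ (g - 1)
      = ξ ^ (-(((j + 1 : ℕ) : ℤ) * d)) * ((∑ k ∈ Finset.range (n + 1), u ^ k) *
          (∑ k ∈ Finset.range (n + 1), v ^ k)) ^ (g - 1) := by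
    intro j hj
    have hcop : (j + 1).Coprime (n + 1) :=
      (Nat.coprime_of_lt_prime (by omega) (by simpa using hj) hr).symm
    have hζ := hprim.pow_of_coprime (j + 1) hcop
    rw [← prod_one_sub_pow_mul hr.pos hζ u, ← prod_one_sub_pow_mul hr.pos hζ v,
      ← Finset.prod_mul_distrib]
    simp only [← pow_mul, mul_comm]
  rw [Finset.sum_range_succ', Finset.sum_congr rfl hterm, ← Finset.sum_mul,
    sum_zpow_succ hr hd hprim]
  simp only [Nat.cast_zero, zero_mul, neg_zero, zpow_zero, mul_zero, pow_zero, one_mul,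
    Finset.prod_const, Nat.card_Icc, Nat.add_sub_cancel, ← pow_mul]
  ring
end

section
/- Let r be a prime, let d be an integer not divisible by r, let g ≥ 1 be an integer, and let u, v be complex numbers. For each natural number m, let c_m denote the coefficient of t^m in the one-variable polynomial ((1 - tu)(1 - tv))^{g-1} ∈ ℂ[t]. Then the sum of ∏_{i=1}^{r-1} c_{m_i} over all tuples (m_1, …, m_{r-1}) of integers with 0 ≤ m_i ≤ 2g-2 for every i and ∑_{i=1}^{r-1} i·m_i ≡ d (mod r) equals (1/r)·( ((1-u)(1-v))^{(r-1)(g-1)} − ( (∑_{k=0}^{r-1} u^k)(∑_{k=0}^{r-1} v^k) )^{g-1} ). -/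
/-!
The congruence condition is detected by characters of `ℤ/r`. With `ζ` a primitive `r`-th root of
unity and `P = ((1 - uX)(1 - vX))^(g-1)`, summing over all tuples with weight `x ^ ∑ i * m_i`
gives `∏_{i=1}^{r-1} P(x^i)` (`sum_pow_mul_prod_eq`), so the sum in question is
`(1/r) ∑_{k<r} ζ^(-kd) ∏_i P(ζ^(ki))` (`sum_root_pow_eq_ite`).

The term `k = 0` is `P(1)^(r-1)`. Since `r` is prime, each `ζ^k` with `0 < k < r` is again primitive,
and `∏_{i=1}^{r-1} (1 - ω^i u) = ∑_{k<r} u^k` for every primitive `ω`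
(`prod_one_sub_root_pow_mul`); hence all terms `k ≠ 0` share the same product, and since `r ∤ d`
their coefficients `ζ^(-kd)` add up to `-1`.
-/

open Finset Polynomial

/-- The factorisation of `1 + x + ⋯ + x^n` over the nontrivial `(n+1)`-th roots of unity. The
division by `1 - x` is carried out with `x` an indeterminate, so that `x = 1` is covered. -/
lemma prod_one_sub_root_pow_mul {n : ℕ} {ω : ℂ} (hω : IsPrimitiveRoot ω (n + 1)) (x : ℂ) :
    ∏ i : Fin n, (1 - x * ω ^ ((i : ℕ) + 1)) = ∑ k ∈ range (n + 1), x ^ k := by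
  have hC : IsPrimitiveRoot (C ω : ℂ[X]) (n + 1) := hω.map_of_injective C_injective
  have h := X_pow_sub_C_eq_prod hC n.succ_pos (rfl : (X : ℂ[X]) ^ (n + 1) = X ^ (n + 1))
  apply_fun Polynomial.eval 1 at h
  simp only [eval_sub, eval_pow, eval_X, eval_C, one_pow, eval_prod] at h
  rw [← mul_neg_geom_sum, prod_range_succ', pow_zero, one_mul, mul_comm] at h
  have h1 : (1 - X : ℂ[X]) ≠ 0 := sub_ne_zero.mpr (ne_of_apply_ne (Polynomial.eval 0) (by simp))
  have h2 := congrArg (Polynomial.eval x) (mul_right_cancel₀ h1 h)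
  simp only [eval_finsetSum, eval_prod, eval_sub, eval_mul, eval_pow, eval_X, eval_C,
    eval_one] at h2
  rw [h2, ← Fin.prod_univ_eq_prod_range (fun i => 1 - ω ^ (i + 1) * x) n]
  exact prod_congr rfl fun i _ => by ring

/-- Orthogonality of the characters of `ℤ/r`. -/
lemma sum_root_pow_eq_ite {r : ℕ} {ζ : ℂ} (hζ : IsPrimitiveRoot ζ r) (N d : ℤ) :
    ∑ k ∈ range r, (ζ ^ (N - d)) ^ k = if N ≡ d [ZMOD (r : ℤ)] then (r : ℂ) else 0 := by
  split_ifs with h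
  · rw [(hζ.zpow_eq_one_iff_dvd _).mpr h.symm.dvd]
    simp
  · have hne : ζ ^ (N - d) ≠ 1 := fun hw =>
      h (Int.modEq_iff_dvd.mpr ((hζ.zpow_eq_one_iff_dvd _).mp hw)).symm
    have hpow : (ζ ^ (N - d)) ^ r = 1 := by
      rw [← zpow_natCast, zpow_comm, zpow_natCast, hζ.pow_eq_one, one_zpow]
    rw [geom_sum_eq hne, hpow, sub_self, zero_div]

/-- The generating function of the tuples `m`, graded by `∑ i * m_i`, factors over the indices. -/
lemma sum_pow_mul_prod_eq {n M : ℕ} {P : ℂ[X]} (hP : P.natDegree < M) (x : ℂ) :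
    ∑ m ∈ Fintype.piFinset (fun _ : Fin n => range M),
      x ^ (∑ i : Fin n, ((i : ℕ) + 1) * m i) * ∏ i : Fin n, P.coeff (m i)
    = ∏ i : Fin n, P.eval (x ^ ((i : ℕ) + 1)) := by
  simp_rw [eval_eq_sum_range' hP]
  rw [prod_univ_sum]
  refine sum_congr rfl fun m _ => ?_
  rw [← prod_pow_eq_pow_sum, ← prod_mul_distrib]
  exact prod_congr rfl fun i _ => by rw [pow_mul, mul_comm]

/-- Combinatorial identity at the heart of Proposition 9.1: with `c_m` the coefficient
of `t^m` in `((1-tu)(1-tv))^{g-1}`, the sum of `∏_{i=1}^{r-1} c_{m_i}` over tuples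
`(m_1, …, m_{r-1})` with `0 ≤ m_i ≤ 2g-2` and `∑ i·m_i ≡ d (mod r)` equals
`(1/r)(((1-u)(1-v))^{(r-1)(g-1)} - ((∑_k u^k)(∑_k v^k))^{g-1})`. -/
theorem stmt1 (r : ℕ) (hr : r.Prime) (d : ℤ) (hd : ¬ ((r : ℤ) ∣ d)) (g : ℕ) (hg : 1 ≤ g)
    (u v : ℂ) (c : ℕ → ℂ)
    (hc : ∀ m : ℕ, c m =
      (((1 - Polynomial.C u * Polynomial.X) * (1 - Polynomial.C v * Polynomial.X)) ^ (g - 1)).coeff m) :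
    ∑ m ∈ (Fintype.piFinset (fun _ : Fin (r - 1) => Finset.range (2 * g - 1))).filter
        (fun m => ((∑ i : Fin (r - 1), ((i : ℕ) + 1) * m i : ℕ) : ℤ) ≡ d [ZMOD (r : ℤ)]),
      ∏ i : Fin (r - 1), c (m i)
    = (1 / r) * (((1 - u) * (1 - v)) ^ ((r - 1) * (g - 1))
        - ((∑ k ∈ Finset.range r, u ^ k) * (∑ k ∈ Finset.range r, v ^ k)) ^ (g - 1)) := by
  obtain rfl : c = _ := funext hc
  set P : ℂ[X] := ((1 - C u * X) * (1 - C v * X)) ^ (g - 1) with hPdef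
  have hP : P.natDegree < 2 * g - 1 := by
    have h1 : P.natDegree ≤ (g - 1) * (1 + 1) := by
      rw [hPdef]
      compute_degree
    omega
  have hPeval (x : ℂ) : P.eval x = ((1 - u * x) * (1 - v * x)) ^ (g - 1) := by
    simp [hPdef]
  have hr0 : (r : ℂ) ≠ 0 := Nat.cast_ne_zero.mpr hr.ne_zero
  obtain ⟨n, rfl⟩ : ∃ n, r = n + 1 := ⟨r - 1, by have := hr.pos; omega⟩
  obtain ⟨ζ, hζ⟩ : ∃ ζ : ℂ, IsPrimitiveRoot ζ (n + 1) :=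
    ⟨_, Complex.isPrimitiveRoot_exp (n + 1) n.succ_ne_zero⟩
  have hζ0 : ζ ≠ 0 := hζ.ne_zero n.succ_ne_zero
  simp only [Nat.add_sub_cancel]
  set Q : ℂ := ((∑ k ∈ range (n + 1), u ^ k) * (∑ k ∈ range (n + 1), v ^ k)) ^ (g - 1) with hQ
  rw [one_div, eq_inv_mul_iff_mul_eq₀ hr0]
  have hone : ∏ i : Fin n, P.eval ((ζ ^ 0) ^ ((i : ℕ) + 1))
      = ((1 - u) * (1 - v)) ^ (n * (g - 1)) := by
    simp [hPeval, ← pow_mul, mul_comm]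
  have hprim (k : ℕ) (hk : k < n) :
      ∏ i : Fin n, P.eval ((ζ ^ (k + 1)) ^ ((i : ℕ) + 1)) = Q := by
    have hω : IsPrimitiveRoot (ζ ^ (k + 1)) (n + 1) :=
      hζ.pow_of_coprime _
        (Nat.coprime_of_lt_prime k.succ_ne_zero (by omega) hr).symm
    simp_rw [hPeval]
    rw [prod_pow, prod_mul_distrib, prod_one_sub_root_pow_mul hω,
      prod_one_sub_root_pow_mul hω]
  -- Orthogonality with `N = 0`: the coefficients of the nontrivial characters add up to `-1`.
  have hcoef : ∑ k ∈ range n, (ζ ^ (-d)) ^ (k + 1) = -1 := by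
    have h := sum_root_pow_eq_ite hζ 0 d
    rw [if_neg fun h0 => hd (by simpa using h0.dvd), sum_range_succ', zero_sub,
      pow_zero] at h
    exact eq_neg_of_add_eq_zero_left h
  calc _ = ∑ m ∈ Fintype.piFinset (fun _ : Fin n => range (2 * g - 1)),
        ∑ k ∈ range (n + 1), (ζ ^ (-d)) ^ k *
          ((ζ ^ k) ^ (∑ i : Fin n, ((i : ℕ) + 1) * m i) * ∏ i : Fin n, P.coeff (m i)) := by
        rw [sum_filter, mul_sum]
        refine sum_congr rfl fun m _ => ?_
        have h := sum_root_pow_eq_ite hζ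
          ((∑ i : Fin n, ((i : ℕ) + 1) * m i : ℕ) : ℤ) d
        simp_rw [← mul_assoc]
        rw [← sum_mul]
        trans (∑ k ∈ range (n + 1), (ζ ^ (((∑ i : Fin n, ((i : ℕ) + 1) * m i : ℕ) : ℤ) - d)) ^ k)
          * ∏ i : Fin n, P.coeff (m i)
        · rw [h]
          change ((n + 1 : ℕ) : ℂ) *
            (if ((∑ i : Fin n, ((i : ℕ) + 1) * m i : ℕ) : ℤ) ≡ d [ZMOD ((n + 1 : ℕ) : ℤ)]
              then ∏ i : Fin n, P.coeff (m i) else 0) = _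
          split_ifs <;> simp
        congr 1
        refine sum_congr rfl fun k _ => ?_
        rw [sub_eq_neg_add, zpow_add₀ hζ0, zpow_natCast, mul_pow, pow_right_comm]
    _ = ∑ k ∈ range (n + 1), (ζ ^ (-d)) ^ k *
          ∏ i : Fin n, P.eval ((ζ ^ k) ^ ((i : ℕ) + 1)) := by
        rw [sum_comm]
        exact sum_congr rfl fun k _ => by rw [← mul_sum, sum_pow_mul_prod_eq hP]
    _ = (∑ k ∈ range n, (ζ ^ (-d)) ^ (k + 1)) * Q
          + ((1 - u) * (1 - v)) ^ (n * (g - 1)) := by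
        rw [sum_range_succ', hone, pow_zero, one_mul, sum_mul]
        congr 1
        exact sum_congr rfl fun k hk => by rw [hprim k (mem_range.mp hk)]
    _ = _ := by
        rw [hcoef]
        ring
end

section
/- Let K be a field, let V be a K-vector space, let f and φ be linear endomorphisms of V, and let t ∈ K satisfy f ∘ φ = t · (φ ∘ f). Then for every λ ∈ K and every natural number k, φ maps the subspace ker((f − λ·id)^k) into ker((f − tλ·id)^k); that is, φ carries the λ-generalized eigenspace of f (at any level k) into the tλ-generalized eigenspace of f. -/
/-- Key step of Lemma 10.2 (Simpson): if `f ∘ φ = t · (φ ∘ f)`, then `φ` maps the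
level-`k` generalized `λ`-eigenspace of `f` into the level-`k` generalized
`tλ`-eigenspace of `f`. -/
theorem stmt5 {K : Type*} [Field K] {V : Type*} [AddCommGroup V] [Module K V]
    (f φ : V →ₗ[K] V) (t : K) (h : f ∘ₗ φ = t • (φ ∘ₗ f)) (lam : K) (k : ℕ) :
    (LinearMap.ker ((f - lam • LinearMap.id) ^ k)).map φ ≤
      LinearMap.ker ((f - (t * lam) • LinearMap.id) ^ k) := by
  -- The relation on `f` says that `φ` intertwines `t • (f - λ)` with `f - tλ`; hence it
  -- intertwines their `k`-th powers, that is, `(f - tλ) ^ k * φ = t ^ k • (φ * (f - λ) ^ k)`.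
  have hs : SemiconjBy φ (t • (f - lam • LinearMap.id)) (f - (t * lam) • LinearMap.id) := by
    ext v
    have hv : f (φ v) = t • φ (f v) := LinearMap.congr_fun h v
    simp [hv, smul_sub, mul_smul]
  rintro _ ⟨v, hv, rfl⟩
  have hv0 := LinearMap.mem_ker.mp hv
  have hk := LinearMap.congr_fun (hs.pow_right k).eq v
  rw [smul_pow, Module.End.mul_apply, Module.End.mul_apply, LinearMap.smul_apply, hv0,
    smul_zero, map_zero] at hk
  exact hk.symm
end
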